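/- For every integer n ≥ 1, the universal enveloping algebra of the Lie algebra 𝕎_n of all k-linear derivations of the polynomial ring k[x₁, …, x_n] is neither left noetherian nor right noetherian. -/

import Mathlib

/-!
Statement 15: For every n ≥ 1, the universal enveloping algebra of the Lie algebra 𝕎ₙ of all
k-linear derivations of the polynomial ring k[x₁,…,xₙ] is neither left nor right noetherian.
-/

noncomputable section

/-- The Lie algebra `𝕎ₙ` of all `k`-linear derivations of `k[x₁, …, xₙ]`. -/
abbrev cartanW (k : Type*) [Field k] (n : ℕ) :=
  Derivation k (MvPolynomial (Fin n) k) (MvPolynomial (Fin n) k)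

/-!
The proof lets `𝕎ₙ` act on pairs `(p, q)` of polynomials by `D (p, q) = (D p, D q + div D * p)`.
For every polynomial `f` there is an element of the enveloping algebra acting as
`(p, q) ↦ (0, 2 f p)`, whereas the enveloping algebra preserves the pairs whose first component is
constant. Hence the elements attached to the powers of a variable generate a right ideal which
is not finitely generated. The left ideal case follows by the principal anti-automorphism.
-/

section EnvelopingAlgebra

attribute [local instance] LieRing.ofAssociativeRing

namespace UniversalEnvelopingAlgebra

open MulOpposite

variable (R : Type*) {L : Type*} [CommRing R] [LieRing L] [LieAlgebra R L]

/-- The universal enveloping algebra is generated by the image of the Lie algebra. -/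
theorem adjoin_range_ι :
    Algebra.adjoin R (Set.range (ι R : L → UniversalEnvelopingAlgebra R L)) = ⊤ := by
  set S := Algebra.adjoin R (Set.range (ι R : L → UniversalEnvelopingAlgebra R L))
  let f : L →ₗ⁅R⁆ S :=
    { toFun := fun x => ⟨ι R x, Algebra.subset_adjoin ⟨x, rfl⟩⟩
      map_add' := fun x y => Subtype.ext (map_add (ι R) x y)
      map_smul' := fun r x => Subtype.ext (map_smul (ι R) r x)
      map_lie' := fun {x y} => Subtype.ext (LieHom.map_lie (ι R) x y) }
  have h : S.val.comp (lift R f) = AlgHom.id R _ := by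
    apply hom_ext
    ext x
    change ((lift R f (ι R x) : S) : UniversalEnvelopingAlgebra R L) = ι R x
    rw [lift_ι_apply]
    rfl
  refine eq_top_iff.mpr fun u _ => ?_
  have hu : ((lift R f u : S) : UniversalEnvelopingAlgebra R L) = u := DFunLike.congr_fun h u
  exact hu ▸ (lift R f u).2

/-- The principal anti-automorphism `x ↦ -x` of the universal enveloping algebra, as a
homomorphism to the opposite algebra. -/
def antipode : UniversalEnvelopingAlgebra R L →ₐ[R] (UniversalEnvelopingAlgebra R L)ᵐᵒᵖ :=
  lift R
    { toFun := fun x => op (-ι R x)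
      map_add' := fun x y => by rw [map_add, neg_add, op_add]
      map_smul' := fun r x => by rw [map_smul, ← smul_neg, op_smul, RingHom.id_apply]
      map_lie' := fun {x y} => by
        rw [LieHom.map_lie, LieRing.of_associative_ring_bracket,
          LieRing.of_associative_ring_bracket, ← op_mul, ← op_mul, ← op_sub]
        congr 1
        noncomm_ring }

theorem antipode_ι (x : L) : antipode R (ι R x) = op (-ι R x) :=
  lift_ι_apply R _ x

theorem antipode_surjective :
    Function.Surjective (antipode R : UniversalEnvelopingAlgebra R L → _) := by
  have h : ∀ u : UniversalEnvelopingAlgebra R L, ∃ v, antipode R v = op u := by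
    intro u
    have hu : u ∈ Algebra.adjoin R (Set.range (ι R : L → UniversalEnvelopingAlgebra R L)) := by
      rw [adjoin_range_ι]
      trivial
    induction hu using Algebra.adjoin_induction with
    | mem _ hx =>
      obtain ⟨x, rfl⟩ := hx
      exact ⟨-ι R x, by rw [map_neg, antipode_ι, ← op_neg, neg_neg]⟩
    | algebraMap r => exact ⟨algebraMap R _ r, by rw [AlgHom.commutes]; rfl⟩
    | add _ _ _ _ hx hy =>
      obtain ⟨⟨v, hv⟩, w, hw⟩ := And.intro hx hy
      exact ⟨v + w, by rw [map_add, hv, hw, op_add]⟩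
    | mul _ _ _ _ hx hy =>
      obtain ⟨⟨v, hv⟩, w, hw⟩ := And.intro hx hy
      exact ⟨w * v, by rw [map_mul, hv, hw, op_mul]⟩
  exact fun u => h u.unop

end UniversalEnvelopingAlgebra

namespace MvPolynomial

section Divergence

variable {R σ : Type*} [CommRing R] [Fintype σ]

theorem derivation_eq_sum_pderiv (D : Derivation R (MvPolynomial σ R) (MvPolynomial σ R))
    (p : MvPolynomial σ R) : D p = ∑ i, D (X i) * pderiv i p := by
  classical
  have hsum : ∀ q, (∑ i, D (X i) • pderiv i : Derivation R (MvPolynomial σ R) _) q =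
      ∑ i, D (X i) * pderiv i q := fun q => by
    rw [← Derivation.coeFnAddMonoidHom_apply, map_sum, Finset.sum_apply]
    rfl
  rw [← hsum]
  congr 1
  refine derivation_ext fun j => ?_
  rw [hsum]
  simp [pderiv_X, Pi.single_apply]

theorem pderiv_derivation_apply (D : Derivation R (MvPolynomial σ R) (MvPolynomial σ R))
    (i : σ) (p : MvPolynomial σ R) :
    pderiv i (D p) = D (pderiv i p) + ∑ j, pderiv i (D (X j)) * pderiv j p := by
  classical
  have h := derivation_eq_sum_pderiv ⁅(pderiv i : Derivation R _ _), D⁆ p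
  have hX : ∀ j, ⁅(pderiv i : Derivation R _ _), D⁆ (X j) = pderiv i (D (X j)) := fun j => by
    rw [Derivation.commutator_apply, pderiv_X, Pi.single_apply]
    split_ifs <;> simp
  simp only [hX] at h
  rw [← h, Derivation.commutator_apply]
  ring

/-- The divergence of a polynomial vector field. -/
def divergence : Derivation R (MvPolynomial σ R) (MvPolynomial σ R) →ₗ[R] MvPolynomial σ R where
  toFun D := ∑ i, pderiv i (D (X i))
  map_add' D E := by simp [Finset.sum_add_distrib]
  map_smul' r D := by simp [Finset.smul_sum]

theorem divergence_apply (D : Derivation R (MvPolynomial σ R) (MvPolynomial σ R)) :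
    divergence D = ∑ i, pderiv i (D (X i)) :=
  rfl

theorem divergence_smul_pderiv (i : σ) (f : MvPolynomial σ R) :
    divergence (f • pderiv i) = pderiv i f := by
  classical
  rw [divergence_apply, Finset.sum_eq_single i]
  · simp
  · intro j _ hj
    simp [pderiv_X_of_ne hj]
  · simp

theorem divergence_lie (D E : Derivation R (MvPolynomial σ R) (MvPolynomial σ R)) :
    divergence ⁅D, E⁆ = D (divergence E) - E (divergence D) := by
  simp only [divergence_apply, Derivation.commutator_apply, map_sub,
    Finset.sum_sub_distrib, map_sum]
  rw [Finset.sum_congr rfl fun i _ => pderiv_derivation_apply D i (E (X i)),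
    Finset.sum_congr rfl fun i _ => pderiv_derivation_apply E i (D (X i)),
    Finset.sum_add_distrib, Finset.sum_add_distrib]
  have h : ∑ i, ∑ j, pderiv i (D (X j)) * pderiv j (E (X i)) =
      ∑ i, ∑ j, pderiv i (E (X j)) * pderiv j (D (X i)) := by
    rw [Finset.sum_comm]
    exact Finset.sum_congr rfl fun i _ => Finset.sum_congr rfl fun j _ => mul_comm _ _
  rw [h]
  ring

end Divergence

section DensityAction

variable (R : Type*) {σ : Type*} [CommRing R] [Fintype σ]

/-- The first-order deformation of the action of vector fields on functions along the
divergence cocycle: `D` sends `(p, q)` to `(D p, D q + div D * p)`. -/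
def densityAction :
    Derivation R (MvPolynomial σ R) (MvPolynomial σ R) →ₗ⁅R⁆
      Module.End R (MvPolynomial σ R × MvPolynomial σ R) where
  toFun D :=
    { toFun := fun v => (D v.1, D v.2 + divergence D * v.1)
      map_add' := fun v w => by
        ext1
        · simp
        · simp only [Prod.snd_add, Prod.fst_add, map_add]
          ring
      map_smul' := fun r v => by simp }
  map_add' D E := by
    refine LinearMap.ext fun v => Prod.ext ?_ ?_
    · simp
    · simp only [LinearMap.coe_mk, AddHom.coe_mk, LinearMap.add_apply, Prod.snd_add, map_add,
        Derivation.add_apply]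
      ring
  map_smul' r D := by
    refine LinearMap.ext fun v => Prod.ext ?_ ?_ <;> simp
  map_lie' {D E} := by
    refine LinearMap.ext fun v => Prod.ext ?_ ?_
    · simp [LieRing.of_associative_ring_bracket, Derivation.commutator_apply]
    · simp only [LieRing.of_associative_ring_bracket, LinearMap.coe_mk, AddHom.coe_mk,
        LinearMap.sub_apply, Module.End.mul_apply, Prod.snd_sub, Derivation.commutator_apply,
        divergence_lie, map_add, Derivation.leibniz, smul_eq_mul]
      ring

/-- The action of the enveloping algebra of polynomial vector fields induced by
`densityAction`. -/
def envelopingDensityAction :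
    UniversalEnvelopingAlgebra R (Derivation R (MvPolynomial σ R) (MvPolynomial σ R)) →ₐ[R]
      Module.End R (MvPolynomial σ R × MvPolynomial σ R) :=
  UniversalEnvelopingAlgebra.lift R (densityAction R)

theorem envelopingDensityAction_ι (D : Derivation R (MvPolynomial σ R) (MvPolynomial σ R))
    (v : MvPolynomial σ R × MvPolynomial σ R) :
    envelopingDensityAction R (UniversalEnvelopingAlgebra.ι R D) v =
      (D v.1, D v.2 + divergence D * v.1) := by
  rw [envelopingDensityAction, UniversalEnvelopingAlgebra.lift_ι_apply]
  rfl

/-- The enveloping algebra preserves the pairs whose first component is constant. -/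
theorem envelopingDensityAction_fst_mem_range_C
    (u : UniversalEnvelopingAlgebra R (Derivation R (MvPolynomial σ R) (MvPolynomial σ R)))
    {v : MvPolynomial σ R × MvPolynomial σ R} (hv : ∃ c, v.1 = C c) :
    ∃ c, (envelopingDensityAction R u v).1 = C c := by
  have hu : u ∈ Algebra.adjoin R (Set.range (UniversalEnvelopingAlgebra.ι R)) := by
    rw [UniversalEnvelopingAlgebra.adjoin_range_ι]
    trivial
  induction hu using Algebra.adjoin_induction generalizing v with
  | mem _ hx =>
    obtain ⟨D, rfl⟩ := hx
    obtain ⟨c, hc⟩ := hv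
    exact ⟨0, by rw [envelopingDensityAction_ι, hc, derivation_C, C_0]⟩
  | algebraMap r =>
    obtain ⟨c, hc⟩ := hv
    exact ⟨r * c, by
      rw [AlgHom.commutes, Module.algebraMap_end_apply, Prod.smul_fst, hc, smul_eq_C_mul, C_mul]⟩
  | add _ _ _ _ hx hy =>
    obtain ⟨⟨c, hc⟩, d, hd⟩ := And.intro (hx hv) (hy hv)
    exact ⟨c + d, by rw [map_add, LinearMap.add_apply, Prod.fst_add, hc, hd, C_add]⟩
  | mul _ _ _ _ hx hy =>
    rw [map_mul, Module.End.mul_apply]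
    exact hx (hy hv)

variable {R}

/-- An element of the enveloping algebra of polynomial vector fields acting on pairs as
`(p, q) ↦ (0, 2 f p)`. -/
def multiplier (i : σ) (f : MvPolynomial σ R) :
    UniversalEnvelopingAlgebra R (Derivation R (MvPolynomial σ R) (MvPolynomial σ R)) :=
  let e (g : MvPolynomial σ R) := UniversalEnvelopingAlgebra.ι R (g • (pderiv i : Derivation R _ _))
  e (f * X i ^ 2) * e 1 - 2 • (e (f * X i) * e (X i)) + e f * e (X i ^ 2)

theorem envelopingDensityAction_multiplier (i : σ) (f : MvPolynomial σ R)
    (v : MvPolynomial σ R × MvPolynomial σ R) :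
    envelopingDensityAction R (multiplier i f) v = (0, 2 * (f * v.1)) := by
  simp only [multiplier, map_add, map_sub, map_mul, map_nsmul, LinearMap.add_apply,
    LinearMap.sub_apply, LinearMap.smul_apply, Module.End.mul_apply, envelopingDensityAction_ι,
    divergence_smul_pderiv, Derivation.smul_apply, smul_eq_mul, Derivation.leibniz,
    Derivation.leibniz_pow, pderiv_X_self, pderiv_one, map_zero]
  refine Prod.ext ?_ ?_
  · simp
    ring
  · simp
    ring

end DensityAction

open UniversalEnvelopingAlgebra MulOpposite in
/-- The enveloping algebra of polynomial vector fields in at least one variable is not right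
noetherian. -/
theorem not_isNoetherianRing_op_enveloping_derivation (k : Type*) {σ : Type*} [Field k]
    [CharZero k] [Fintype σ] (i : σ) :
    ¬ IsNoetherianRing
      (UniversalEnvelopingAlgebra k (Derivation k (MvPolynomial σ k) (MvPolynomial σ k)))ᵐᵒᵖ := by
  classical
  intro hN
  set U := UniversalEnvelopingAlgebra k (Derivation k (MvPolynomial σ k) (MvPolynomial σ k))
  let u : ℕ → Uᵐᵒᵖ := fun m => op (multiplier i (X i ^ m))
  let J : ℕ →o Ideal Uᵐᵒᵖ :=
    ⟨fun m => Ideal.span (Set.image u (Set.Iio m)), fun a b hab =>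
      Ideal.span_mono (Set.image_mono (Set.Iio_subset_Iio hab))⟩
  obtain ⟨m, hm⟩ := monotone_stabilizes_iff_noetherian.mpr hN J
  have hmem : u m ∈ J m := by
    rw [hm (m + 1) m.le_succ]
    exact Ideal.subset_span ⟨m, m.lt_succ_self, rfl⟩
  have hcoeff : ∀ w ∈ J m, ∀ v : MvPolynomial σ k × MvPolynomial σ k, (∃ c, v.1 = C c) →
      coeff (Finsupp.single i m) (envelopingDensityAction k w.unop v).2 = 0 := by
    intro w hw
    induction hw using Submodule.span_induction with
    | mem _ hx =>
      obtain ⟨j, hj, rfl⟩ := hx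
      rintro v ⟨c, hc⟩
      have hne : Finsupp.single i j ≠ Finsupp.single i m := fun h =>
        (ne_of_lt hj) (Finsupp.single_injective i h)
      simp only [u, unop_op, envelopingDensityAction_multiplier, hc]
      rw [← map_ofNat C 2, coeff_C_mul, mul_comm _ (C c), coeff_C_mul, coeff_X_pow, if_neg hne,
        mul_zero, mul_zero]
    | zero => simp
    | add _ _ _ _ hx hy =>
      intro v hv
      rw [unop_add, map_add, LinearMap.add_apply, Prod.snd_add, coeff_add, hx v hv, hy v hv,
        add_zero]
    | smul a x _ hx =>
      intro v hv
      rw [smul_eq_mul, unop_mul, map_mul, Module.End.mul_apply]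
      exact hx _ (envelopingDensityAction_fst_mem_range_C k a.unop hv)
  have h := hcoeff _ hmem (1, 0) ⟨1, C_1.symm⟩
  simp only [u, unop_op, envelopingDensityAction_multiplier, mul_one] at h
  rw [← map_ofNat C 2, coeff_C_mul, coeff_X_pow, if_pos rfl, mul_one] at h
  exact two_ne_zero h

end MvPolynomial

end EnvelopingAlgebra

theorem enveloping_cartanW_not_noetherian (k : Type*) [Field k] [CharZero k]
    (n : ℕ) (hn : 1 ≤ n) :
    ¬ IsNoetherianRing (UniversalEnvelopingAlgebra k (cartanW k n)) ∧
      ¬ IsNoetherianRing (UniversalEnvelopingAlgebra k (cartanW k n))ᵐᵒᵖ := by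
  have h := MvPolynomial.not_isNoetherianRing_op_enveloping_derivation k (⟨0, hn⟩ : Fin n)
  exact ⟨fun _ => h (isNoetherianRing_of_surjective _ _
    (UniversalEnvelopingAlgebra.antipode k).toRingHom
    (UniversalEnvelopingAlgebra.antipode_surjective k)), h⟩

end
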